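/- arXiv:2405.04022 — 3 statements merged into one kernel-verified Lean document; each statement's English description precedes it below -/
import Mathlib

section
/- Let R be a potential domain (a UFD such that all power series rings R[[X₁,…,Xₙ]] are UFDs) and s : (-ℕ)ⁿ → R an eventually rectilinear sequence. Then for each i ∈ {1,…,n}, the elimination ideal Ann(s) ∩ R[Xᵢ] is a principal ideal with a unique monic generator. -/
noncomputable section

variable {R : Type*}

/-- Right-shift action of a (multivariate) polynomial on a sequence indexed by `(-ℕ)^n`;
the index `a : σ → ℕ` encodes the point `-a`, so `(f ∘ s)_{-b} = ∑ f_a s_{-b-a}`. -/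
def shiftA [CommSemiring R] {σ : Type*} (f : MvPolynomial σ R) (s : (σ → ℕ) → R) :
    (σ → ℕ) → R :=
  fun b => ∑ a ∈ f.support, f.coeff a * s (fun j => b j + a j)

/-- The generating function `Γ(s) = ∑_{c ≤ 0} s_c X^c`, as a coefficient function on `ℤ^n`. -/
def GammaZ [Zero R] {n : ℕ} (s : (Fin n → ℕ) → R) : (Fin n → ℤ) → R :=
  fun c => if ∀ i, c i ≤ 0 then s (fun i => (-(c i)).toNat) else 0

/-- Coefficient function of the product `f · G` in the Laurent series ring
`R((X₁⁻¹, …, Xₙ⁻¹))`. -/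
def polyMulG [CommSemiring R] {n : ℕ} (f : MvPolynomial (Fin n) R) (G : (Fin n → ℤ) → R) :
    (Fin n → ℤ) → R :=
  fun c => ∑ a ∈ f.support, f.coeff a * G (fun i => c i - (a i : ℤ))

/-- Vector of partial degrees `δᵢ f`. -/
def degV [CommSemiring R] {n : ℕ} (f : MvPolynomial (Fin n) R) : Fin n → ℕ :=
  fun i => f.support.sup fun a => a i

/-- `degV` as a finitely supported function. -/
def degE [CommSemiring R] {n : ℕ} (f : MvPolynomial (Fin n) R) : Fin n →₀ ℕ :=
  Finsupp.equivFunOnFinite.symm (degV f)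

/-- Embedding of `R[Xᵢ]` into `R[X₁,…,Xₙ]`. -/
def embedP [CommSemiring R] {n : ℕ} (i : Fin n) (p : Polynomial R) : MvPolynomial (Fin n) R :=
  Polynomial.eval₂ MvPolynomial.C (MvPolynomial.X i) p

def toExp {n : ℕ} (c : Fin n → ℤ) : Fin n →₀ ℕ :=
  Finsupp.equivFunOnFinite.symm fun i => (c i).toNat

/-- The coefficient function on `ℤ^n` of a polynomial. -/
def toCoeffZ [CommSemiring R] {n : ℕ} (g : MvPolynomial (Fin n) R) : (Fin n → ℤ) → R :=
  fun c => if ∀ i, 0 ≤ c i then g.coeff (toExp c) else 0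

def oneExp {n : ℕ} : Fin n →₀ ℕ := Finsupp.equivFunOnFinite.symm 1

/-- The border polynomial `β₀(f,s) = (f·Γ(s)) | [1, deg f]`. -/
def mvBeta0 [CommRing R] {n : ℕ} (f : MvPolynomial (Fin n) R) (s : (Fin n → ℕ) → R) :
    MvPolynomial (Fin n) R :=
  ∑ c ∈ Finset.Icc oneExp (degE f),
    MvPolynomial.monomial c (polyMulG f (GammaZ s) fun i => (c i : ℤ))

/-- `β₀(f,s) / (X₁⋯Xₙ)`. -/
def mvBeta0Div [CommRing R] {n : ℕ} (f : MvPolynomial (Fin n) R) (s : (Fin n → ℕ) → R) :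
    MvPolynomial (Fin n) R :=
  ∑ c ∈ Finset.Icc oneExp (degE f),
    MvPolynomial.monomial (c - oneExp) (polyMulG f (GammaZ s) fun i => (c i : ℤ))

/-- `β₀(f,s) / Xᵢ`. -/
def mvBeta0DivXi [CommRing R] {n : ℕ} (i : Fin n) (f : MvPolynomial (Fin n) R)
    (s : (Fin n → ℕ) → R) : MvPolynomial (Fin n) R :=
  ∑ c ∈ Finset.Icc oneExp (degE f),
    MvPolynomial.monomial (c - Finsupp.single i 1) (polyMulG f (GammaZ s) fun i => (c i : ℤ))

/-- Generalized Newton divided difference `ν^a f = (f | [a, deg f]) / X^a`. -/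
def nuA [CommRing R] {n : ℕ} (a : Fin n →₀ ℕ) (f : MvPolynomial (Fin n) R) :
    MvPolynomial (Fin n) R :=
  ∑ b ∈ Finset.Icc a (degE f), MvPolynomial.monomial (b - a) (f.coeff b)

open Polynomial in
/-- If no nonzero polynomial of degree `< d` annihilates `s`, there are linear functionals that
vanish on `s, T s, …, T ^ (e - 1) s` but not on `f(T) s`, for any `f` of degree in `[e, d)`. -/
theorem exists_functional_vanishing_on_powers [CommRing R] [IsDomain R] {M : Type*}
    [AddCommGroup M] [Module R M] (T : Module.End R M) (s : M)
    (hsep : ∀ m : M, m ≠ 0 → ∃ l : M →ₗ[R] R, l m ≠ 0) {d : ℕ}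
    (hd : ∀ f : R[X], f ≠ 0 → f.natDegree < d → aeval T f s ≠ 0) (e : ℕ) :
    ∀ f : R[X], f ≠ 0 → e ≤ f.natDegree → f.natDegree < d →
      ∃ l : M →ₗ[R] R, (∀ j < e, l ((T ^ j) s) = 0) ∧ l (aeval T f s) ≠ 0 := by
  induction e with
  | zero =>
    intro f hf _ hfd
    obtain ⟨l, hl⟩ := hsep _ (hd f hf hfd)
    exact ⟨l, by simp, hl⟩
  | succ e ih =>
    intro f hf hef hfd
    obtain ⟨l, hl0, hl⟩ := ih (X ^ e) (pow_ne_zero _ X_ne_zero) (by simp) (by simp; omega)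
    simp only [map_pow, aeval_X] at hl
    set r := l ((T ^ e) s) with hr
    set f' : R[X] := C r * f - C (l (aeval T f s)) * X ^ e with hf'
    have hdeg : f'.natDegree = f.natDegree := by
      rw [hf', natDegree_sub_eq_left_of_natDegree_lt, natDegree_C_mul hl]
      rw [natDegree_C_mul hl]
      exact (natDegree_C_mul_X_pow_le _ _).trans_lt (by omega)
    have hne : f' ≠ 0 := by
      rintro h
      rw [h, natDegree_zero] at hdeg
      omega
    obtain ⟨m, hm0, hm⟩ := ih f' hne (by omega) (by omega)
    refine ⟨r • m - m ((T ^ e) s) • l, fun j hj => ?_, ?_⟩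
    · rcases Nat.lt_succ_iff_lt_or_eq.mp hj with hj | rfl
      · simp [hl0 j hj, hm0 j hj]
      · simp [← hr, mul_comm]
    · have : m (aeval T f' s) = r * m (aeval T f s) - l (aeval T f s) * m ((T ^ e) s) := by
        simp [hf', aeval_C]
      simpa [← hr, mul_comm (m ((T ^ e) s)), this] using hm

open Polynomial in
theorem prime_dvd_of_linear_recurrence [CommRing R] {g : R[X]} {q : R} (hq : Prime q)
    (hlead : q ∣ g.leadingCoeff) (hg : ¬ C q ∣ g) {w : ℕ → R}
    (hrec : ∀ k, ∑ j ∈ Finset.range (g.natDegree + 1), g.coeff j * w (k + j) = 0)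
    (hzero : ∀ k, k + 1 < g.natDegree → w k = 0) (k : ℕ) : q ∣ w k := by
  classical
  obtain ⟨j, hj, hjmax⟩ : ∃ j, ¬ q ∣ g.coeff j ∧ ∀ i, j < i → q ∣ g.coeff i := by
    have hex : ∃ j, ¬ q ∣ g.coeff j := by simpa [C_dvd_iff_dvd_coeff] using hg
    have hle : ∀ j, ¬ q ∣ g.coeff j → j ≤ g.natDegree := fun j hj =>
      le_natDegree_of_ne_zero fun h => hj (h ▸ dvd_zero q)
    obtain ⟨j₀, hj₀⟩ := hex
    refine ⟨Nat.findGreatest (fun j => ¬ q ∣ g.coeff j) g.natDegree,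
      Nat.findGreatest_spec (P := fun j => ¬ q ∣ g.coeff j) (hle j₀ hj₀) hj₀, fun i hi => ?_⟩
    by_contra h
    exact Nat.findGreatest_is_greatest hi (hle i h) h
  have hjd : j < g.natDegree := by
    refine lt_of_le_of_ne (le_natDegree_of_ne_zero fun h => hj (h ▸ dvd_zero q)) ?_
    rintro rfl
    exact hj hlead
  induction k using Nat.strong_induction_on with
  | _ k ih =>
    by_cases hk : k + 1 < g.natDegree
    · simp [hzero k hk]
    have hsum := hrec (k - j)
    rw [← Finset.add_sum_erase _ _ (Finset.mem_range.mpr (by omega : j < g.natDegree + 1)),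
      Nat.sub_add_cancel (by omega)] at hsum
    have hrest : q ∣ ∑ i ∈ (Finset.range (g.natDegree + 1)).erase j,
        g.coeff i * w (k - j + i) := by
      refine Finset.dvd_sum fun i hi => ?_
      rcases lt_or_gt_of_ne (Finset.ne_of_mem_erase hi) with h | h
      · exact (ih _ (by omega)).mul_left _
      · exact (hjmax i h).mul_right _
    have : q ∣ g.coeff j * w k := (dvd_add_left hrest).mp (hsum ▸ dvd_zero q)
    exact (hq.dvd_or_dvd this).resolve_left hj

open Polynomial in
theorem prime_pow_dvd_of_linear_recurrence [CommRing R] [IsDomain R] {g : R[X]} {q : R}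
    (hq : Prime q) (hlead : q ∣ g.leadingCoeff) (hg : ¬ C q ∣ g) (m : ℕ) :
    ∀ {w : ℕ → R},
      (∀ k, ∑ j ∈ Finset.range (g.natDegree + 1), g.coeff j * w (k + j) = 0) →
      (∀ k, k + 1 < g.natDegree → w k = 0) → ∀ k, q ^ m ∣ w k := by
  induction m with
  | zero => simp
  | succ m ih =>
    intro w hrec hzero
    choose v hv using prime_dvd_of_linear_recurrence hq hlead hg hrec hzero
    obtain rfl : w = fun k => q * v k := funext hv
    have hrec' : ∀ k, ∑ j ∈ Finset.range (g.natDegree + 1), g.coeff j * v (k + j) = 0 := by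
      intro k
      have := hrec k
      simp only [mul_left_comm _ q, ← Finset.mul_sum] at this
      exact (mul_eq_zero.mp this).resolve_left hq.ne_zero
    have hzero' : ∀ k, k + 1 < g.natDegree → v k = 0 := fun k hk =>
      (mul_eq_zero.mp (hzero k hk)).resolve_left hq.ne_zero
    intro k
    rw [pow_succ']
    exact mul_dvd_mul_left q (ih hrec' hzero' k)

open Polynomial in
/-- A primitive annihilating polynomial of minimal degree has unit leading coefficient. -/
theorem isUnit_leadingCoeff_of_minimal [CommRing R] [IsDomain R] [UniqueFactorizationMonoid R]
    {M : Type*} [AddCommGroup M] [Module R M] (T : Module.End R M) (s : M)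
    (hsep : ∀ m : M, m ≠ 0 → ∃ l : M →ₗ[R] R, l m ≠ 0) {g : R[X]} (hg : g.IsPrimitive)
    (hgs : aeval T g s = 0)
    (hmin : ∀ f : R[X], f ≠ 0 → f.natDegree < g.natDegree → aeval T f s ≠ 0) :
    IsUnit g.leadingCoeff := by
  by_contra hu
  have hg0 : g ≠ 0 := hg.ne_zero
  obtain ⟨q, hqi, hlead⟩ := WfDvdMonoid.exists_irreducible_factor hu (leadingCoeff_ne_zero.mpr hg0)
  have hq : Prime q := hqi.prime
  have hCq : ¬ C q ∣ g := fun h => hq.not_isUnit (hg q h)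
  have hpos : 0 < g.natDegree := by
    by_contra h
    rw [leadingCoeff, Nat.eq_zero_of_not_pos h] at hlead
    refine hCq ?_
    rw [eq_C_of_natDegree_eq_zero (Nat.eq_zero_of_not_pos h)]
    exact _root_.map_dvd C hlead
  obtain ⟨l, hl0, hl⟩ := exists_functional_vanishing_on_powers T s hsep hmin (g.natDegree - 1)
    (X ^ (g.natDegree - 1)) (pow_ne_zero _ X_ne_zero) (by simp) (by simp; omega)
  simp only [map_pow, aeval_X] at hl
  have hrec : ∀ k, ∑ j ∈ Finset.range (g.natDegree + 1),
      g.coeff j * l ((T ^ (k + j)) s) = 0 := by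
    intro k
    have h : l ((T ^ k) (aeval T g s)) = 0 := by simp [hgs]
    rw [aeval_eq_sum_range] at h
    simpa [pow_add, LinearMap.sum_apply] using h
  have hpow := fun m => prime_pow_dvd_of_linear_recurrence hq hlead hCq m
    (w := fun k => l ((T ^ k) s)) hrec (fun k hk => hl0 k (by omega)) (g.natDegree - 1)
  obtain ⟨m, hm⟩ := FiniteMultiplicity.of_prime_left hq hl
  exact hm (hpow _)

open Polynomial in
theorem exists_monic_aeval_apply_eq_zero_iff_dvd [CommRing R] [IsDomain R]
    [UniqueFactorizationMonoid R] {M : Type*} [AddCommGroup M] [Module R M]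
    (T : Module.End R M) (s : M) (hsep : ∀ m : M, m ≠ 0 → ∃ l : M →ₗ[R] R, l m ≠ 0)
    (hex : ∃ p : R[X], p ≠ 0 ∧ aeval T p s = 0) :
    ∃ g : R[X], g.Monic ∧ ∀ p : R[X], aeval T p s = 0 ↔ g ∣ p := by
  have htors : ∀ (r : R) (m : M), r ≠ 0 → r • m = 0 → m = 0 := by
    intro r m hr hm
    by_contra h
    obtain ⟨l, hl⟩ := hsep m h
    have := congrArg l hm
    simp [hr, hl] at this
  obtain ⟨p, ⟨hp0, hps⟩, hpmin⟩ :=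
    exists_minimalFor_of_wellFoundedLT (fun p : R[X] => p ≠ 0 ∧ aeval T p s = 0) natDegree hex
  have hmin : ∀ f : R[X], f ≠ 0 → f.natDegree < p.natDegree → aeval T f s ≠ 0 :=
    fun f hf hlt hfs => absurd (hpmin ⟨hf, hfs⟩ hlt.le) (by omega)
  let _ : NormalizedGCDMonoid R := Classical.choice inferInstance
  have hprim : aeval T p.primPart s = 0 := by
    refine htors p.content _ (by simpa [content_eq_zero_iff] using hp0) ?_
    rw [p.eq_C_content_mul_primPart] at hps
    simpa [aeval_C] using hps
  obtain ⟨u, hu⟩ := isUnit_leadingCoeff_of_minimal T s hsep p.isPrimitive_primPart hprim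
    (by simpa only [natDegree_primPart] using hmin)
  set g : R[X] := C (↑u⁻¹ : R) * p.primPart with hgdef
  have hgm : g.Monic := by
    simp [Monic, hgdef, leadingCoeff_mul, ← hu]
  have hgs : aeval T g s = 0 := by simp [hgdef, hprim]
  have hdeg : g.natDegree = p.natDegree := by
    rw [hgdef, natDegree_C_mul u⁻¹.ne_zero, natDegree_primPart]
  have hdvd : ∀ f, g ∣ f → aeval T f s = 0 := by
    rintro _ ⟨f, rfl⟩
    rw [mul_comm]
    simp [hgs]
  refine ⟨g, hgm, fun f => ⟨fun hf => ?_, hdvd f⟩⟩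
  have hmod : aeval T (f %ₘ g) s = 0 := by
    rw [modByMonic_eq_sub_mul_div, map_sub, LinearMap.sub_apply, hf,
      hdvd _ (dvd_mul_right g _), sub_zero]
  rw [← modByMonic_eq_zero_iff_dvd hgm]
  by_contra h
  refine hmin _ h (hdeg ▸ natDegree_modByMonic_lt f hgm ?_) hmod
  rintro h1
  simp [h1] at h

/-- The right shift in the `i`-th coordinate, as a linear endomorphism of sequences. -/
def shiftEnd [CommRing R] {n : ℕ} (i : Fin n) : Module.End R ((Fin n → ℕ) → R) :=
  LinearMap.funLeft R R fun b => b + Pi.single i 1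

theorem shiftEnd_pow_apply [CommRing R] {n : ℕ} (i : Fin n) (k : ℕ) (s : (Fin n → ℕ) → R)
    (b : Fin n → ℕ) : (shiftEnd i ^ k) s b = s (b + Pi.single i k) := by
  induction k generalizing b with
  | zero => simp
  | succ k ih =>
    rw [pow_succ', Module.End.mul_apply, shiftEnd, LinearMap.funLeft_apply, ← shiftEnd, ih,
      add_assoc, ← Pi.single_add, add_comm 1 k]

theorem shiftA_eq_sum_of_support_subset [CommSemiring R] {σ : Type*} (f : MvPolynomial σ R)
    (s : (σ → ℕ) → R) (b : σ → ℕ) {t : Finset (σ →₀ ℕ)} (h : f.support ⊆ t) :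
    shiftA f s b = ∑ a ∈ t, f.coeff a * s (fun j => b j + a j) :=
  Finset.sum_subset h fun a _ ha => by simp [MvPolynomial.notMem_support_iff.mp ha]

theorem shiftA_add [CommSemiring R] {σ : Type*} (f g : MvPolynomial σ R) (s : (σ → ℕ) → R) :
    shiftA (f + g) s = shiftA f s + shiftA g s := by
  classical
  funext b
  rw [Pi.add_apply, shiftA_eq_sum_of_support_subset _ s b MvPolynomial.support_add,
    shiftA_eq_sum_of_support_subset f s b Finset.subset_union_left,
    shiftA_eq_sum_of_support_subset g s b Finset.subset_union_right, ← Finset.sum_add_distrib]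
  simp [add_mul]

theorem shiftA_monomial [CommSemiring R] {σ : Type*} (a : σ →₀ ℕ) (r : R) (s : (σ → ℕ) → R)
    (b : σ → ℕ) : shiftA (MvPolynomial.monomial a r) s b = r * s (fun j => b j + a j) := by
  classical
  rw [shiftA_eq_sum_of_support_subset _ s b MvPolynomial.support_monomial_subset]
  simp [MvPolynomial.coeff_monomial]

theorem shiftA_embedP [CommRing R] {n : ℕ} (i : Fin n) (p : Polynomial R)
    (s : (Fin n → ℕ) → R) :
    shiftA (embedP i p) s = Polynomial.aeval (shiftEnd (R := R) i) p s := by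
  induction p using Polynomial.induction_on' with
  | add p q hp hq =>
    rw [embedP, Polynomial.eval₂_add, shiftA_add, ← embedP, ← embedP, hp, hq, map_add,
      LinearMap.add_apply]
  | monomial k r =>
    funext b
    rw [embedP, Polynomial.eval₂_monomial, MvPolynomial.C_mul_X_pow_eq_monomial,
      shiftA_monomial, Polynomial.aeval_monomial, Module.End.mul_apply,
      Module.algebraMap_end_apply, Pi.smul_apply, shiftEnd_pow_apply, smul_eq_mul]
    congr 2
    funext j
    simp [Finsupp.single_apply, Pi.single_apply, eq_comm]

/-- over a potential domain (a UFD all of whose power series rings are UFDs),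
for an eventually rectilinear sequence `s`, each elimination ideal `Ann(s) ∩ R[Xᵢ]` is
principal with a unique monic generator. -/
theorem stmt13 [CommRing R] [IsDomain R] [UniqueFactorizationMonoid R] {n : ℕ}
    (hpot : ∀ m : ℕ,
      haveI : IsDomain (MvPowerSeries (Fin m) R) := NoZeroDivisors.to_isDomain _
      UniqueFactorizationMonoid (MvPowerSeries (Fin m) R))
    (s : (Fin n → ℕ) → R)
    (hevr : ∀ i : Fin n, ∃ p : Polynomial R, 1 ≤ p.natDegree ∧ shiftA (embedP i p) s = 0) :
    ∀ i : Fin n, ∃! g : Polynomial R,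
      g.Monic ∧ ∀ p : Polynomial R, (shiftA (embedP i p) s = 0 ↔ g ∣ p) := by
  intro i
  obtain ⟨p, hp, hps⟩ := hevr i
  obtain ⟨g, hgm, hg⟩ := exists_monic_aeval_apply_eq_zero_iff_dvd (shiftEnd (R := R) i) s
    (fun m hm => by
      obtain ⟨b, hb⟩ := Function.ne_iff.mp hm
      exact ⟨LinearMap.proj b, hb⟩)
    ⟨p, by rintro rfl; simp at hp, by rw [← shiftA_embedP, hps]⟩
  simp only [shiftA_embedP]
  exact ⟨g, ⟨hgm, hg⟩, fun g' ⟨hgm', hg'⟩ => Polynomial.eq_of_monic_of_associated hgm' hgm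
    (associated_of_dvd_dvd ((hg' g).mp ((hg g).mpr dvd_rfl)) ((hg g').mp ((hg' g').mpr dvd_rfl)))⟩
end
end

section
/- Let R be a potential domain, s : (-ℕ)ⁿ → R, and for each i let fᵢ ∈ Ann(s) ∩ R[Xᵢ] with deg fᵢ ≥ 1. Put f = ∏ᵢ fᵢ and dᵢ = gcd(fᵢ, β₀(f,s)/Xᵢ). Then for each i there is a unit uᵢ of R such that uᵢ·fᵢ/dᵢ is the monic generator of Ann(s) ∩ R[Xᵢ]. -/
noncomputable section

variable {R : Type*}

open Polynomial in
/-- Let `q` annihilate the sequence `μ`, and let `e` be the degree of `q` modulo a prime `π`. If `μ`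
vanishes before `e`, then every power of `π` divides `μ e`. -/
theorem Prime.pow_dvd_of_recurrence [CommRing R] [IsDomain R] {π : R} (hπ : Prime π) {q : R[X]}
    {e : ℕ} (he : ¬ π ∣ q.coeff e) (he' : ∀ j, e < j → π ∣ q.coeff j) (n : ℕ) :
    ∀ μ : ℕ → R, (∀ m, q.sum (fun k a => a * μ (m + k)) = 0) → (∀ j < e, μ j = 0) →
      π ^ n ∣ μ e := by
  induction n with
  | zero => simp
  | succ n ih =>
    intro μ hμ h0
    have key : ∀ k, π ∣ μ k := by
      intro k
      induction k using Nat.strong_induction_on with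
      | _ k hk =>
        rcases lt_or_ge k e with hke | hke
        · simp [h0 k hke]
        · obtain ⟨m, rfl⟩ := Nat.exists_eq_add_of_le' hke
          have hm := hμ m
          have hes : e ∈ q.support := by
            rw [mem_support_iff]; rintro h; simp [h] at he
          rw [Polynomial.sum, ← Finset.add_sum_erase _ _ hes] at hm
          have h2 : π ∣ ∑ x ∈ q.support.erase e, q.coeff x * μ (m + x) := by
            refine Finset.dvd_sum fun x hx => ?_
            rcases lt_or_gt_of_ne (Finset.ne_of_mem_erase hx) with h | h
            · exact (hk _ (by lia)).mul_left _
            · exact (he' _ h).mul_right _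
          have h3 : π ∣ q.coeff e * μ (m + e) := by
            rw [eq_neg_of_add_eq_zero_left hm]; exact h2.neg_right
          exact (hπ.dvd_or_dvd h3).resolve_left he
    choose ν hν using key
    rw [hν e, pow_succ']
    refine mul_dvd_mul_left _ (ih ν (fun m => ?_) fun j hj => ?_)
    · have := hμ m
      rw [Polynomial.sum] at this ⊢
      refine (mul_eq_zero.1 (?_ : π * _ = 0)).resolve_left hπ.ne_zero
      rw [← this, Finset.mul_sum]
      exact Finset.sum_congr rfl fun k _ => by rw [hν]; ring
    · have := h0 j hj
      rw [hν j] at this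
      exact (mul_eq_zero.1 this).resolve_left hπ.ne_zero

open Polynomial in
/-- If no nonzero polynomial of degree `e` or less annihilates a family of sequences which are
all annihilated by `q`, then some sequence annihilated by `q` vanishes before `e` but not
at `e`. -/
theorem exists_sequence_order_eq [CommRing R] [IsDomain R] {ι : Type*} (t : ι → ℕ → R) (q : R[X])
    (hq : ∀ b m, q.sum (fun k a => a * t b (m + k)) = 0) (e : ℕ)
    (h : ∀ p : R[X], p.natDegree ≤ e → (∀ b, p.sum (fun k a => a * t b k) = 0) → p = 0) :
    ∃ μ : ℕ → R, (∀ m, q.sum (fun k a => a * μ (m + k)) = 0) ∧ (∀ j < e, μ j = 0) ∧ μ e ≠ 0 := by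
  classical
  let K := FractionRing R
  have hinj : Function.Injective (algebraMap R K) := IsFractionRing.injective R K
  let N : Submodule K (ℕ → K) := Submodule.span K (Set.range fun b k => algebraMap R K (t b k))
  have hN1 : ∀ μ ∈ N, ∃ r : R, r ≠ 0 ∧ ∃ ν : ℕ → R, ∀ k, algebraMap R K (ν k) =
      algebraMap R K r * μ k := by
    intro μ hμ
    induction hμ using Submodule.span_induction with
    | mem x hx =>
      obtain ⟨b, rfl⟩ := hx
      exact ⟨1, one_ne_zero, t b, by simp⟩
    | zero => exact ⟨1, one_ne_zero, 0, by simp⟩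
    | add x y _ _ hx hy =>
      obtain ⟨r, hr, ν, hν⟩ := hx
      obtain ⟨r', hr', ν', hν'⟩ := hy
      refine ⟨r * r', mul_ne_zero hr hr', fun k => r' * ν k + r * ν' k, fun k => ?_⟩
      simp only [map_add, map_mul, hν, hν', Pi.add_apply]
      ring
    | smul a w _ hw =>
      obtain ⟨r, hr, ν, hν⟩ := hw
      obtain ⟨x, y, hy, rfl⟩ := IsFractionRing.div_surjective (A := R) a
      have hy0 := nonZeroDivisors.ne_zero hy
      have hy' : algebraMap R K y ≠ 0 := by simpa using hy0
      refine ⟨r * y, mul_ne_zero hr hy0, fun k => x * ν k, fun k => ?_⟩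
      have hxy := mul_div_cancel₀ (algebraMap R K x) hy'
      simp only [map_mul, hν, Pi.smul_apply, smul_eq_mul]
      linear_combination (-(algebraMap R K r * w k)) * hxy
  have hN2 : ∀ μ ∈ N, ∀ m, q.sum (fun k a => algebraMap R K a * μ (m + k)) = 0 := by
    intro μ hμ m
    induction hμ using Submodule.span_induction with
    | mem x hx =>
      obtain ⟨b, rfl⟩ := hx
      have := congrArg (algebraMap R K) (hq b m)
      simpa [Polynomial.sum] using this
    | zero => simp [Polynomial.sum]
    | add x y _ _ hx hy =>
      simp only [Polynomial.sum, Pi.add_apply, mul_add, Finset.sum_add_distrib] at *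
      simp [hx, hy]
    | smul a x _ hx =>
      simp only [Polynomial.sum, Pi.smul_apply, smul_eq_mul, mul_left_comm _ a,
        ← Finset.mul_sum] at *
      simp [hx]
  obtain ⟨μ, hμN, hμ0, hμe⟩ : ∃ μ ∈ N, (∀ j < e, μ j = 0) ∧ μ e ≠ 0 := by
    by_contra! hcon
    let ev : ℕ → Module.Dual K N := fun j => (LinearMap.proj j).comp N.subtype
    have hmem : ev e ∈ Submodule.span K (Set.range fun j : Fin e => ev j) := by
      apply mem_span_of_iInf_ker_le_ker
      rintro ⟨μ, hμ⟩ hμ'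
      simp only [Submodule.mem_iInf, LinearMap.mem_ker] at hμ' ⊢
      exact hcon μ hμ fun j hj => hμ' ⟨j, hj⟩
    obtain ⟨c, hc⟩ := (Submodule.mem_span_range_iff_exists_fun K).1 hmem
    obtain ⟨r, hr⟩ := IsLocalization.exist_integer_multiples_of_finite (nonZeroDivisors R) c
    choose c' hc' using hr
    have hr0 : (r : R) ≠ 0 := nonZeroDivisors.ne_zero r.2
    let p : R[X] := C (r : R) * X ^ e - ∑ j : Fin e, C (c' j) * X ^ (j : ℕ)
    have hp : p = 0 := by
      refine h p ?_ fun b => ?_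
      · refine (natDegree_sub_le _ _).trans (max_le (natDegree_C_mul_X_pow_le _ _) ?_)
        exact natDegree_sum_le_of_forall_le _ _ fun j _ =>
          (natDegree_C_mul_X_pow_le _ _).trans j.2.le
      · apply hinj
        have hb := LinearMap.congr_fun hc ⟨_, Submodule.subset_span ⟨b, rfl⟩⟩
        simp only [LinearMap.sum_apply, LinearMap.smul_apply, LinearMap.comp_apply, ev,
          Submodule.subtype_apply, LinearMap.proj_apply, smul_eq_mul] at hb
        have hlin : p.sum (fun k a => a * t b k) =
            r * t b e - ∑ j : Fin e, c' j * t b j := by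
          let φ : R[X] →ₗ[R] R := Polynomial.lsum fun k => LinearMap.mulRight R (t b k)
          change φ p = _
          simp only [p, map_sub, map_sum, C_mul_X_pow_eq_monomial]
          simp [φ, Polynomial.lsum_apply]
        rw [hlin]
        simp only [map_sub, map_mul, map_sum, hc', map_zero, ← hb, Finset.mul_sum,
          Algebra.smul_def, mul_assoc, sub_self]
    have : p.coeff e = r := by
      simp only [p, coeff_sub, finsetSum_coeff, coeff_C_mul, coeff_X_pow]
      simp only [if_true, mul_one, sub_eq_self]
      exact Finset.sum_eq_zero fun j _ => by simp [j.2.ne']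
    rw [hp] at this
    exact hr0 (by simpa using this.symm)
  obtain ⟨r, hr, ν, hν⟩ := hN1 μ hμN
  refine ⟨ν, fun m => hinj ?_, fun j hj => hinj ?_, fun h0 => ?_⟩
  · have := hN2 μ hμN m
    simp only [Polynomial.sum, map_sum, map_mul, hν, map_zero] at this ⊢
    simp only [mul_left_comm _ (algebraMap R K r), ← Finset.mul_sum, this, mul_zero]
  · rw [hν, hμ0 j hj, mul_zero, map_zero]
  · have := hν e
    rw [h0, map_zero, eq_comm, mul_eq_zero] at this
    exact this.elim (by simpa using hr) hμe

open Polynomial in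
/-- Fatou's lemma: over a unique factorization domain, a generator of the annihilator of a family
of linear recurring sequences has invertible leading coefficient. -/
theorem isUnit_leadingCoeff_of_annihilator_eq [CommRing R] [IsDomain R]
    [UniqueFactorizationMonoid R] {ι : Type*} (t : ι → ℕ → R) {q : R[X]} (hq0 : q ≠ 0)
    (hq : ∀ b m, q.sum (fun k a => a * t b (m + k)) = 0)
    (h : ∀ p : R[X], (∀ b, p.sum (fun k a => a * t b k) = 0) → q ∣ p) :
    IsUnit q.leadingCoeff := by
  by_contra hu
  obtain ⟨π, hirr, hπl⟩ := WfDvdMonoid.exists_irreducible_factor hu (by simpa using hq0)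
  have hπ := hirr.prime
  have hndvd : ¬ C π ∣ q := by
    rintro ⟨q', rfl⟩
    have hq'0 : q' ≠ 0 := right_ne_zero_of_mul hq0
    have hd : C π * q' ∣ q' := h q' fun b => by
      refine (mul_eq_zero.1 (?_ : π * _ = 0)).resolve_left hπ.ne_zero
      have := hq b 0
      rw [← smul_eq_C_mul, Polynomial.sum_smul_index _ _ _ (by simp)] at this
      simpa [Polynomial.sum, Finset.mul_sum, mul_assoc] using this
    have : IsUnit (C π) := by
      apply isUnit_of_dvd_one
      rw [← mul_dvd_mul_iff_right hq'0, one_mul]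
      exact hd
    exact hπ.not_isUnit (isUnit_C.1 this)
  rw [C_dvd_iff_dvd_coeff] at hndvd
  have hbig : ∀ j, q.natDegree ≤ j → π ∣ q.coeff j := by
    intro j hj
    rcases hj.eq_or_lt with rfl | hj
    · exact hπl
    · simp [coeff_eq_zero_of_natDegree_lt hj]
  classical
  push Not at hndvd
  obtain ⟨j, hj⟩ := hndvd
  let e := Nat.findGreatest (fun j => ¬ π ∣ q.coeff j) q.natDegree
  have hjle : j ≤ q.natDegree := by
    by_contra! hlt
    exact hj (hbig j hlt.le)
  have he : ¬ π ∣ q.coeff e :=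
    Nat.findGreatest_spec (P := fun j => ¬ π ∣ q.coeff j) hjle hj
  have he' : ∀ k, e < k → π ∣ q.coeff k := by
    intro k hk
    rcases le_or_gt k q.natDegree with hkd | hkd
    · exact not_not.1 (Nat.findGreatest_is_greatest hk hkd)
    · exact hbig k hkd.le
  have hlt : e < q.natDegree := by
    by_contra! hle
    exact he (hbig e hle)
  obtain ⟨μ, h1, h2, h3⟩ := exists_sequence_order_eq t q hq e fun p hp hp' => by
    by_contra hp0
    exact absurd (natDegree_le_of_dvd (h p hp') hp0) (by lia)
  obtain ⟨n, hn⟩ := FiniteMultiplicity.of_not_isUnit hπ.not_isUnit h3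
  exact hn (hπ.pow_dvd_of_recurrence he he' (n + 1) μ h1 h2)

section LaurentAction

variable {n : ℕ}

section CommSemiring

variable [CommSemiring R]

theorem polyMulG_eq_sum_of_subset {f : MvPolynomial (Fin n) R} {S : Finset (Fin n →₀ ℕ)}
    (hS : f.support ⊆ S) (G : (Fin n → ℤ) → R) (c : Fin n → ℤ) :
    polyMulG f G c = ∑ a ∈ S, f.coeff a * G (fun i => c i - (a i : ℤ)) :=
  Finset.sum_subset hS fun a _ ha => by rw [MvPolynomial.notMem_support_iff.1 ha, zero_mul]

theorem polyMulG_add_left (f g : MvPolynomial (Fin n) R) (G : (Fin n → ℤ) → R) :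
    polyMulG (f + g) G = polyMulG f G + polyMulG g G := by
  classical
  funext c
  rw [Pi.add_apply, polyMulG_eq_sum_of_subset (S := f.support ∪ g.support)
    MvPolynomial.support_add, polyMulG_eq_sum_of_subset Finset.subset_union_left,
    polyMulG_eq_sum_of_subset (f := g) Finset.subset_union_right, ← Finset.sum_add_distrib]
  simp only [MvPolynomial.coeff_add, add_mul]

theorem polyMulG_add_right (f : MvPolynomial (Fin n) R) (G H : (Fin n → ℤ) → R) :
    polyMulG f (G + H) = polyMulG f G + polyMulG f H := by
  funext c
  simp only [polyMulG, Pi.add_apply, mul_add, Finset.sum_add_distrib]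

theorem polyMulG_monomial (a : Fin n →₀ ℕ) (r : R) (G : (Fin n → ℤ) → R) (c : Fin n → ℤ) :
    polyMulG (MvPolynomial.monomial a r) G c = r * G (fun i => c i - (a i : ℤ)) := by
  classical
  rw [polyMulG_eq_sum_of_subset MvPolynomial.support_monomial_subset]
  simp

theorem polyMulG_mul (f g : MvPolynomial (Fin n) R) (G : (Fin n → ℤ) → R) :
    polyMulG (f * g) G = polyMulG f (polyMulG g G) := by
  induction f using MvPolynomial.induction_on' with
  | add f₁ f₂ h₁ h₂ => rw [add_mul, polyMulG_add_left, polyMulG_add_left, h₁, h₂]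
  | monomial a r =>
    induction g using MvPolynomial.induction_on' with
    | add g₁ g₂ h₁ h₂ =>
      rw [mul_add, polyMulG_add_left, polyMulG_add_left, polyMulG_add_right, h₁, h₂]
    | monomial b r' =>
      funext c
      simp only [MvPolynomial.monomial_mul, polyMulG_monomial, mul_assoc, Finsupp.add_apply,
        Nat.cast_add, sub_sub]

theorem polyMulG_one (G : (Fin n → ℤ) → R) : polyMulG 1 G = G := by
  funext c
  rw [← MvPolynomial.C_1, MvPolynomial.C_apply, polyMulG_monomial]
  simp

theorem embedP_add (i : Fin n) (p q : Polynomial R) :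
    embedP i (p + q) = embedP i p + embedP i q :=
  Polynomial.eval₂_add _ _

theorem embedP_mul (i : Fin n) (p q : Polynomial R) :
    embedP i (p * q) = embedP i p * embedP i q :=
  Polynomial.eval₂_mul _ _

theorem embedP_C (i : Fin n) (r : R) : embedP i (Polynomial.C r) = MvPolynomial.C r :=
  Polynomial.eval₂_C _ _

theorem embedP_monomial (i : Fin n) (k : ℕ) (r : R) :
    embedP i (Polynomial.monomial k r) = MvPolynomial.monomial (Finsupp.single i k) r := by
  rw [embedP, Polynomial.eval₂_monomial, MvPolynomial.C_mul_X_pow_eq_monomial]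

/-- A left inverse of `embedP`. -/
theorem aeval_embedP (i : Fin n) (p : Polynomial R) :
    MvPolynomial.aeval (fun _ => (Polynomial.X : Polynomial R)) (embedP i p) = p := by
  induction p using Polynomial.induction_on' with
  | add p q hp hq => rw [embedP_add, map_add, hp, hq]
  | monomial k r =>
    rw [embedP, Polynomial.eval₂_monomial]
    simp [Polynomial.C_mul_X_pow_eq_monomial]

theorem embedP_injective (i : Fin n) :
    Function.Injective (embedP i : Polynomial R → MvPolynomial (Fin n) R) :=
  Function.LeftInverse.injective (aeval_embedP i)

theorem embedP_dvd_embedP_iff (i : Fin n) {p q : Polynomial R} :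
    embedP i p ∣ embedP i q ↔ p ∣ q := by
  constructor
  · intro h
    simpa only [aeval_embedP] using
      map_dvd (MvPolynomial.aeval (R := R) fun _ : Fin n => (Polynomial.X : Polynomial R)) h
  · rintro ⟨r, rfl⟩
    exact ⟨_, embedP_mul i p r⟩

theorem polyMulG_embedP (j : Fin n) (p : Polynomial R) (G : (Fin n → ℤ) → R) (c : Fin n → ℤ) :
    polyMulG (embedP j p) G c = p.sum fun k a => a * G (Function.update c j (c j - k)) := by
  induction p using Polynomial.induction_on' with
  | add p q hp hq =>
    rw [embedP_add, polyMulG_add_left, Pi.add_apply, hp, hq, Polynomial.sum_add_index] <;>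
      simp [add_mul]
  | monomial k r =>
    rw [embedP_monomial, polyMulG_monomial, Polynomial.sum_monomial_index _ _ (by simp)]
    congr 2
    funext l
    rcases eq_or_ne l j with rfl | h
    · simp
    · simp [h]

theorem shiftA_eq_polyMulG (f : MvPolynomial (Fin n) R) (s : (Fin n → ℕ) → R) (b : Fin n → ℕ) :
    shiftA f s b = polyMulG f (GammaZ s) (fun i => -(b i : ℤ)) := by
  refine Finset.sum_congr rfl fun a _ => ?_
  rw [GammaZ, if_pos fun i => by lia]
  congr 2
  funext i
  lia

theorem GammaZ_eq_zero_of_lt (s : (Fin n → ℕ) → R) (j : Fin n) (c : Fin n → ℤ) (hc : 0 < c j) :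
    GammaZ s c = 0 :=
  if_neg fun h => absurd (h j) (by lia)

theorem shiftA_embedP_eq_zero_iff (j : Fin n) (p : Polynomial R) (s : (Fin n → ℕ) → R) :
    shiftA (embedP j p) s = 0 ↔ ∀ c, c j ≤ 0 → polyMulG (embedP j p) (GammaZ s) c = 0 := by
  constructor
  · intro h c hc
    by_cases hall : ∀ i, c i ≤ 0
    · have := congrFun h fun i => (-(c i)).toNat
      rw [shiftA_eq_polyMulG] at this
      rw [← Pi.zero_apply (M := fun _ => R), ← this]
      congr 1
      funext i
      have := hall i
      lia
    · push Not at hall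
      obtain ⟨k, hk⟩ := hall
      have hkj : k ≠ j := by rintro rfl; lia
      rw [polyMulG_embedP]
      refine Finset.sum_eq_zero fun m _ => ?_
      beta_reduce
      rw [GammaZ_eq_zero_of_lt s k _ (by rwa [Function.update_of_ne hkj]), mul_zero]
  · intro h
    funext b
    rw [shiftA_eq_polyMulG, h _ (by simp), Pi.zero_apply]

theorem shiftA_embedP_s14 (j : Fin n) (p : Polynomial R) (s : (Fin n → ℕ) → R) (b : Fin n → ℕ) :
    shiftA (embedP j p) s b = p.sum fun k a => a * s (Function.update b j (b j + k)) := by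
  rw [shiftA_eq_polyMulG, polyMulG_embedP]
  refine Finset.sum_congr rfl fun k _ => ?_
  beta_reduce
  congr 1
  unfold GammaZ
  rw [if_pos]
  · congr 1
    funext i
    rcases eq_or_ne i j with rfl | h
    · simp
      lia
    · simp [h]
  · intro i
    rcases eq_or_ne i j with rfl | h
    · simp
    · simp [h]

theorem polyMulG_eq_zero_of_le (f : MvPolynomial (Fin n) R) {G : (Fin n → ℤ) → R} {j : Fin n}
    (hG : ∀ c, c j ≤ 0 → G c = 0) (c : Fin n → ℤ) (hc : c j ≤ 0) : polyMulG f G c = 0 :=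
  Finset.sum_eq_zero fun a _ => by rw [hG _ (by lia), mul_zero]

theorem polyMulG_eq_zero_of_lt (f : MvPolynomial (Fin n) R) {G : (Fin n → ℤ) → R} {j : Fin n}
    {N : ℤ} (hG : ∀ c, N < c j → G c = 0) (c : Fin n → ℤ) (hc : N + degV f j < c j) :
    polyMulG f G c = 0 :=
  Finset.sum_eq_zero fun a ha => by
    have : a j ≤ degV f j := Finset.le_sup (f := fun a : Fin n →₀ ℕ => a j) ha
    rw [hG _ (by lia), mul_zero]

theorem toCoeffZ_natCast (g : MvPolynomial (Fin n) R) (a : Fin n →₀ ℕ) :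
    toCoeffZ g (fun i => (a i : ℤ)) = g.coeff a := by
  rw [toCoeffZ, if_pos fun i => by lia]
  congr 1
  ext i
  simp [toExp]

theorem toCoeffZ_injective :
    Function.Injective (toCoeffZ : MvPolynomial (Fin n) R → (Fin n → ℤ) → R) := by
  intro g h hgh
  ext a
  rw [← toCoeffZ_natCast, hgh, toCoeffZ_natCast]

theorem toCoeffZ_mul (f g : MvPolynomial (Fin n) R) :
    toCoeffZ (f * g) = polyMulG f (toCoeffZ g) := by
  classical
  induction f using MvPolynomial.induction_on' with
  | add f₁ f₂ h₁ h₂ =>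
    rw [add_mul, polyMulG_add_left, ← h₁, ← h₂]
    funext c
    simp only [toCoeffZ, Pi.add_apply, MvPolynomial.coeff_add]
    split_ifs <;> simp
  | monomial a r =>
    funext c
    rw [polyMulG_monomial]
    by_cases hc : ∀ i, 0 ≤ c i
    · rw [toCoeffZ, if_pos hc, MvPolynomial.coeff_monomial_mul', toCoeffZ]
      have hiff : a ≤ toExp c ↔ ∀ i, 0 ≤ c i - (a i : ℤ) := by
        refine forall_congr' fun i => ?_
        have := hc i
        simp only [toExp, Finsupp.equivFunOnFinite_symm_apply_apply]
        lia
      simp only [hiff]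
      split_ifs with h
      · congr 2
        ext i
        simp only [toExp, Finsupp.equivFunOnFinite_symm_apply_apply, Finsupp.tsub_apply]
        have := h i
        lia
      · simp
    · rw [toCoeffZ, if_neg hc, toCoeffZ, if_neg, mul_zero]
      exact fun h => hc fun i => by have := h i; lia

theorem toCoeffZ_eq_zero_of_lt (g : MvPolynomial (Fin n) R) (j : Fin n) (c : Fin n → ℤ)
    (hc : (degV g j : ℤ) < c j) : toCoeffZ g c = 0 := by
  rw [← mul_one g, toCoeffZ_mul]
  refine polyMulG_eq_zero_of_lt (N := 0) (j := j) g (fun c hc => ?_) c (by lia)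
  rw [toCoeffZ]
  split_ifs
  · rw [MvPolynomial.coeff_one, if_neg]
    intro h
    have := DFunLike.congr_fun h j
    simp only [toExp, Finsupp.equivFunOnFinite_symm_apply_apply, Finsupp.zero_apply] at this
    lia
  · rfl

end CommSemiring

variable [CommRing R]

/-- Division of a Laurent series by `Xᵢ`, on coefficient functions. -/
def divXZ (i : Fin n) (G : (Fin n → ℤ) → R) : (Fin n → ℤ) → R :=
  fun c => G (c + Pi.single i 1)

theorem polyMulG_divXZ (i : Fin n) (f : MvPolynomial (Fin n) R) (G : (Fin n → ℤ) → R) :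
    polyMulG f (divXZ i G) = divXZ i (polyMulG f G) := by
  funext c
  refine Finset.sum_congr rfl fun a _ => ?_
  rw [divXZ]
  congr 2
  funext j
  simp only [Pi.add_apply]
  ring

theorem toCoeffZ_mvBeta0DivXi (i : Fin n) (g : MvPolynomial (Fin n) R) (s : (Fin n → ℕ) → R)
    (h : ∀ j c, c j ≤ 0 → polyMulG g (GammaZ s) c = 0) :
    toCoeffZ (mvBeta0DivXi i g s) = divXZ i (polyMulG g (GammaZ s)) := by
  classical
  funext c
  rw [divXZ]
  by_cases hc : ∀ j, 0 ≤ c j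
  · obtain ⟨m, rfl⟩ : ∃ m : Fin n →₀ ℕ, c = fun i => (m i : ℤ) := by
      refine ⟨toExp c, ?_⟩
      funext j
      have := hc j
      simp only [toExp, Finsupp.equivFunOnFinite_symm_apply_apply]
      lia
    rw [toCoeffZ_natCast, mvBeta0DivXi, MvPolynomial.coeff_sum]
    simp only [MvPolynomial.coeff_monomial]
    have hcast : (fun j => (m j : ℤ)) + Pi.single i 1 =
        fun j => (((m + Finsupp.single i 1 : Fin n →₀ ℕ) j : ℕ) : ℤ) := by
      funext j
      rcases eq_or_ne j i with rfl | hj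
      · simp
      · simp [hj]
    rw [Finset.sum_eq_single (m + Finsupp.single i 1)]
    · rw [add_tsub_cancel_right, if_pos rfl, hcast]
    · intro b hb hne
      rw [if_neg]
      rintro rfl
      apply hne
      rw [tsub_add_cancel_of_le]
      rw [Finsupp.single_le_iff]
      exact (Finset.mem_Icc.1 hb).1 i
    · intro hmem
      rw [add_tsub_cancel_right, if_pos rfl]
      rw [Finset.mem_Icc, not_and_or] at hmem
      rcases hmem with hmem | hmem <;> rw [Finsupp.le_def, not_forall] at hmem <;>
        obtain ⟨j, hj⟩ := hmem
      · refine h j _ ?_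
        simp only [oneExp, Finsupp.equivFunOnFinite_symm_apply_apply, Pi.one_apply] at hj
        lia
      · refine polyMulG_eq_zero_of_lt (N := 0) (j := j) g (GammaZ_eq_zero_of_lt s j) _ ?_
        simp only [degE, Finsupp.equivFunOnFinite_symm_apply_apply] at hj
        lia
  · rw [toCoeffZ, if_neg hc]
    push Not at hc
    obtain ⟨j, hj⟩ := hc
    refine (h j _ ?_).symm
    rcases eq_or_ne j i with rfl | hji
    · simp; lia
    · simp [hji]; lia

theorem eq_zero_of_polyMulG_embedP_eq_zero [IsDomain R] {j : Fin n} {p : Polynomial R}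
    (hp : p ≠ 0) {G : (Fin n → ℤ) → R} {N : ℤ} (hN : ∀ c, N < c j → G c = 0)
    (h : polyMulG (embedP j p) G = 0) : G = 0 := by
  classical
  by_contra hG
  obtain ⟨c, hc⟩ := Function.ne_iff.1 hG
  obtain ⟨k, hk, hmax⟩ := Int.exists_greatest_of_bdd (P := fun k => G (Function.update c j k) ≠ 0)
    ⟨N, fun k hk => by
      by_contra! hlt
      exact hk (hN _ (by simpa using hlt))⟩ ⟨c j, by simpa using hc⟩
  have h0 := congrFun h (Function.update c j (k + p.natDegree))
  rw [polyMulG_embedP, Polynomial.sum, Finset.sum_eq_single p.natDegree] at h0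
  · simp only [Function.update_idem, Function.update_self, add_sub_cancel_right, Pi.zero_apply,
      mul_eq_zero, Polynomial.coeff_natDegree, Polynomial.leadingCoeff_eq_zero] at h0
    exact h0.elim hp hk
  · intro m hm hne
    have hlt : m < p.natDegree := lt_of_le_of_ne (Polynomial.le_natDegree_of_mem_supp m hm) hne
    simp only [Function.update_idem, Function.update_self]
    by_contra hne'
    have := hmax _ (right_ne_zero_of_mul hne')
    lia
  · intro hnm
    rw [Polynomial.notMem_support_iff.1 hnm, zero_mul]

theorem polyMulG_embedP_injOn [IsDomain R] {j : Fin n} {p : Polynomial R} (hp : p ≠ 0)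
    {G H : (Fin n → ℤ) → R} {M N : ℤ} (hG : ∀ c, M < c j → G c = 0)
    (hH : ∀ c, N < c j → H c = 0) (h : polyMulG (embedP j p) G = polyMulG (embedP j p) H) :
    G = H := by
  rw [← sub_eq_zero]
  refine eq_zero_of_polyMulG_embedP_eq_zero (j := j) (N := max M N) hp (fun c hc => ?_) ?_
  · rw [Pi.sub_apply, hG c (by lia), hH c (by lia), sub_zero]
  · have := polyMulG_add_right (embedP j p) (G - H) H
    rw [sub_add_cancel, h] at this
    exact right_eq_add.1 this

theorem eq_zero_of_polyMulG_prod_embedP_eq_zero [IsDomain R] (S : Finset (Fin n))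
    {f : Fin n → Polynomial R} (hf : ∀ j, f j ≠ 0) {G : (Fin n → ℤ) → R}
    (hN : ∀ j, ∃ N : ℤ, ∀ c, N < c j → G c = 0)
    (h : polyMulG (∏ j ∈ S, embedP j (f j)) G = 0) : G = 0 := by
  classical
  induction S using Finset.induction_on generalizing G with
  | empty => rwa [Finset.prod_empty, polyMulG_one] at h
  | insert j S hj ih =>
    rw [Finset.prod_insert hj, mul_comm, polyMulG_mul] at h
    obtain ⟨N, hN'⟩ := hN j
    refine eq_zero_of_polyMulG_embedP_eq_zero (hf j) hN' (ih (fun k => ?_) h)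
    obtain ⟨M, hM⟩ := hN k
    exact ⟨_, polyMulG_eq_zero_of_lt _ hM⟩

/-- The part of a Laurent series of nonpositive degree in `Xᵢ`. -/
def truncZ (i : Fin n) (G : (Fin n → ℤ) → R) : (Fin n → ℤ) → R :=
  fun c => if c i ≤ 0 then G c else 0

theorem polyMulG_embedP_truncZ {i j : Fin n} (hij : i ≠ j) (p : Polynomial R)
    (G : (Fin n → ℤ) → R) :
    polyMulG (embedP j p) (truncZ i G) = truncZ i (polyMulG (embedP j p) G) := by
  funext c
  simp only [truncZ, polyMulG_embedP, Function.update_of_ne hij]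
  split_ifs <;> simp [Polynomial.sum]

theorem polyMulG_prod_embedP_truncZ {i : Fin n} {S : Finset (Fin n)} (hi : i ∉ S)
    (f : Fin n → Polynomial R) (G : (Fin n → ℤ) → R) :
    polyMulG (∏ j ∈ S, embedP j (f j)) (truncZ i G) =
      truncZ i (polyMulG (∏ j ∈ S, embedP j (f j)) G) := by
  classical
  induction S using Finset.induction_on with
  | empty => rw [Finset.prod_empty, polyMulG_one, polyMulG_one]
  | insert j S hj ih =>
    rw [Finset.mem_insert, not_or] at hi
    rw [Finset.prod_insert hj, polyMulG_mul, ih hi.2, polyMulG_embedP_truncZ hi.1, polyMulG_mul]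

theorem exists_embedP_eq_of_dvd [IsDomain R] {i : Fin n} {p : Polynomial R} (hp : p ≠ 0)
    {q : MvPolynomial (Fin n) R} (h : q ∣ embedP i p) : ∃ r : Polynomial R, embedP i r = q := by
  classical
  have hp0 : embedP i p ≠ 0 := fun h0 => hp (embedP_injective i (h0.trans (Polynomial.eval₂_zero _ _).symm))
  have hdeg : ∀ j, j ≠ i → q.degreeOf j = 0 := by
    intro j hj
    obtain ⟨d, hd⟩ := h
    have hz : (embedP i p).degreeOf j = 0 := by
      clear hd hp0 hp
      induction p using Polynomial.induction_on' with
      | add p p' h h' =>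
        rw [embedP_add]
        have := MvPolynomial.degreeOf_add_le j (embedP i p) (embedP i p')
        lia
      | monomial k r =>
        rw [embedP_monomial]
        by_cases hr : r = 0
        · simp [hr]
        · rw [MvPolynomial.degreeOf_monomial_eq _ _ hr, Finsupp.single_eq_of_ne hj]
    rw [hd] at hz hp0
    rw [MvPolynomial.degreeOf_mul_eq (left_ne_zero_of_mul hp0) (right_ne_zero_of_mul hp0)] at hz
    lia
  refine ⟨MvPolynomial.aeval (fun _ => Polynomial.X) q, ?_⟩
  let φ : MvPolynomial (Fin n) R →+* MvPolynomial (Fin n) R :=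
    (Polynomial.eval₂RingHom MvPolynomial.C (MvPolynomial.X i)).comp
      (MvPolynomial.aeval (R := R) fun _ : Fin n => (Polynomial.X : Polynomial R)).toRingHom
  change φ q = RingHom.id _ q
  refine MvPolynomial.hom_congr_vars ?_ (fun j hj _ => ?_) rfl
  · ext r : 1
    simp [φ]
  · have hji : j = i := by
      by_contra hne
      exact MvPolynomial.mem_vars_iff_degreeOf_ne_zero.1 hj (hdeg j hne)
    subst hji
    simp [φ]


theorem polyMulG_prod_embedP_eq_zero {s : (Fin n → ℕ) → R} {f : Fin n → Polynomial R}
    {S : Finset (Fin n)} {j : Fin n} (hj : j ∈ S) (hann : shiftA (embedP j (f j)) s = 0)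
    (g : MvPolynomial (Fin n) R) (c : Fin n → ℤ) (hc : c j ≤ 0) :
    polyMulG (g * ∏ j ∈ S, embedP j (f j)) (GammaZ s) c = 0 := by
  classical
  rw [← Finset.prod_erase_mul _ _ hj, ← mul_assoc, polyMulG_mul]
  exact polyMulG_eq_zero_of_le _ ((shiftA_embedP_eq_zero_iff j _ s).1 hann) c hc

theorem toCoeffZ_mvBeta0DivXi_prod {s : (Fin n → ℕ) → R} {f : Fin n → Polynomial R}
    (hann : ∀ j, shiftA (embedP j (f j)) s = 0) (i : Fin n) :
    toCoeffZ (mvBeta0DivXi i (∏ j, embedP j (f j)) s) =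
      divXZ i (polyMulG (∏ j, embedP j (f j)) (GammaZ s)) := by
  refine toCoeffZ_mvBeta0DivXi i _ s fun j c hc => ?_
  rw [← one_mul (∏ j, embedP j (f j))]
  exact polyMulG_prod_embedP_eq_zero (Finset.mem_univ j) (hann j) 1 c hc

theorem embedP_dvd_mul_mvBeta0DivXi {s : (Fin n → ℕ) → R} {f : Fin n → Polynomial R}
    (hann : ∀ j, shiftA (embedP j (f j)) s = 0) (i : Fin n) {p : Polynomial R}
    (hp : shiftA (embedP i p) s = 0) :
    embedP i (f i) ∣ embedP i p * mvBeta0DivXi i (∏ j, embedP j (f j)) s := by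
  classical
  refine ⟨mvBeta0DivXi i (embedP i p * ∏ j ∈ Finset.univ.erase i, embedP j (f j)) s,
    toCoeffZ_injective ?_⟩
  rw [toCoeffZ_mul, toCoeffZ_mul, toCoeffZ_mvBeta0DivXi_prod hann, toCoeffZ_mvBeta0DivXi,
    polyMulG_divXZ, polyMulG_divXZ, ← polyMulG_mul, ← polyMulG_mul,
    ← Finset.mul_prod_erase _ _ (Finset.mem_univ i), mul_left_comm]
  intro j c hc
  rcases eq_or_ne j i with rfl | hji
  · rw [mul_comm, polyMulG_mul]
    exact polyMulG_eq_zero_of_le _ ((shiftA_embedP_eq_zero_iff j _ s).1 hp) c hc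
  · exact polyMulG_prod_embedP_eq_zero (by simp [hji]) (hann j) _ c hc

theorem shiftA_embedP_eq_zero_of_dvd_mvBeta0DivXi [IsDomain R] {s : (Fin n → ℕ) → R}
    {f : Fin n → Polynomial R} (hann : ∀ j, shiftA (embedP j (f j)) s = 0) (hf : ∀ j, f j ≠ 0)
    {i : Fin n} {d q : Polynomial R} (hdq : f i = d * q)
    (hd : embedP i d ∣ mvBeta0DivXi i (∏ j, embedP j (f j)) s) :
    shiftA (embedP i q) s = 0 := by
  classical
  obtain ⟨b, hb⟩ := hd
  have hd0 : d ≠ 0 := left_ne_zero_of_mul (hdq ▸ hf i)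
  let F := ∏ j ∈ Finset.univ.erase i, embedP j (f j)
  have hbd : ∀ (g : MvPolynomial (Fin n) R) (j : Fin n) (c : Fin n → ℤ), (0 : ℤ) + degV g j < c j →
      polyMulG g (GammaZ s) c = 0 :=
    fun g j => polyMulG_eq_zero_of_lt g (GammaZ_eq_zero_of_lt s j)
  have hprod : toCoeffZ b = divXZ i (polyMulG (F * embedP i q) (GammaZ s)) := by
    refine polyMulG_embedP_injOn hd0 (toCoeffZ_eq_zero_of_lt b i)
      (N := degV (F * embedP i q) i) (fun c hc => hbd _ i _ ?_) ?_
    · simp; lia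
    · rw [← toCoeffZ_mul, ← hb, toCoeffZ_mvBeta0DivXi_prod hann, polyMulG_divXZ, ← polyMulG_mul,
        ← Finset.mul_prod_erase _ _ (Finset.mem_univ i), hdq, embedP_mul, mul_assoc,
        mul_comm (embedP i q)]
  have htrunc : truncZ i (polyMulG (embedP i q) (GammaZ s)) = 0 := by
    refine eq_zero_of_polyMulG_prod_embedP_eq_zero (Finset.univ.erase i) hf
      (fun j => ⟨0 + degV (embedP i q) j, fun c hc => ?_⟩) ?_
    · rw [truncZ, hbd _ j c hc, ite_self]
    · rw [polyMulG_prod_embedP_truncZ (Finset.notMem_erase i _), ← polyMulG_mul]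
      funext c
      rw [truncZ]
      split_ifs with hc
      · have := congrFun hprod (c - Pi.single i 1)
        rw [divXZ, sub_add_cancel, toCoeffZ, if_neg] at this
        · exact this.symm
        · intro h
          have := h i
          simp at this
          lia
      · rfl
  rw [shiftA_embedP_eq_zero_iff]
  intro c hc
  have := congrFun htrunc c
  rwa [truncZ, if_pos hc] at this

theorem isUnit_leadingCoeff_of_shiftA_eq_zero_iff_dvd [IsDomain R] [UniqueFactorizationMonoid R]
    {s : (Fin n → ℕ) → R} {i : Fin n} {q : Polynomial R} (hq0 : q ≠ 0)
    (h : ∀ p : Polynomial R, shiftA (embedP i p) s = 0 ↔ q ∣ p) : IsUnit q.leadingCoeff := by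
  refine isUnit_leadingCoeff_of_annihilator_eq
    (fun (b : Fin n → ℕ) k => s (Function.update b i (b i + k))) hq0 (fun b m => ?_) fun p hp => ?_
  · have := congrFun ((h q).2 dvd_rfl) (Function.update b i (b i + m))
    rw [shiftA_embedP_s14] at this
    simpa [add_assoc] using this
  · refine (h p).1 ?_
    funext b
    rw [shiftA_embedP_s14]
    exact hp b

end LaurentAction

/-- over a potential domain, with `fᵢ ∈ Ann(s) ∩ R[Xᵢ]`, `f = ∏ᵢ fᵢ` and
`dᵢ = gcd(fᵢ, β₀(f,s)/Xᵢ)`, there is a unit `uᵢ` of `R` such that `uᵢ·fᵢ/dᵢ` is the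
monic generator of `Ann(s) ∩ R[Xᵢ]`. -/
theorem stmt14 [CommRing R] [IsDomain R] [UniqueFactorizationMonoid R] {n : ℕ}
    (hpot : ∀ m : ℕ,
      haveI : IsDomain (MvPowerSeries (Fin m) R) := NoZeroDivisors.to_isDomain _
      UniqueFactorizationMonoid (MvPowerSeries (Fin m) R))
    (s : (Fin n → ℕ) → R) (f : Fin n → Polynomial R) (d : Fin n → MvPolynomial (Fin n) R)
    (hdeg : ∀ i, 1 ≤ (f i).natDegree)
    (hann : ∀ i, shiftA (embedP i (f i)) s = 0)
    (hd1 : ∀ i, d i ∣ embedP i (f i))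
    (hd2 : ∀ i, d i ∣ mvBeta0DivXi i (∏ j, embedP j (f j)) s)
    (hd3 : ∀ i, ∀ e : MvPolynomial (Fin n) R,
      e ∣ embedP i (f i) → e ∣ mvBeta0DivXi i (∏ j, embedP j (f j)) s → e ∣ d i) :
    ∀ i : Fin n, ∃ (u : Rˣ) (g : Polynomial R) (q : MvPolynomial (Fin n) R),
      embedP i (f i) = d i * q ∧
      embedP i g = MvPolynomial.C (u : R) * q ∧
      g.Monic ∧
      ∀ p : Polynomial R, shiftA (embedP i p) s = 0 ↔ g ∣ p := by
  intro i
  have hf : ∀ j, f j ≠ 0 := fun j h0 => by simpa [h0] using hdeg j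
  obtain ⟨q, hq⟩ := hd1 i
  obtain ⟨q', rfl⟩ := exists_embedP_eq_of_dvd (hf i) (Dvd.intro_left _ hq.symm)
  obtain ⟨d', hd'⟩ := exists_embedP_eq_of_dvd (hf i) (hd1 i)
  have hfi : f i = d' * q' := embedP_injective i (by rw [hq, embedP_mul, hd'])
  have hq0 : q' ≠ 0 := right_ne_zero_of_mul (hfi ▸ hf i)
  have hdi0 : d i ≠ 0 := by
    rintro h0
    rw [h0] at hd'
    have : d' = 0 := embedP_injective i (hd'.trans (Polynomial.eval₂_zero _ _).symm)
    exact left_ne_zero_of_mul (hfi ▸ hf i) this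
  have hqs : shiftA (embedP i q') s = 0 :=
    shiftA_embedP_eq_zero_of_dvd_mvBeta0DivXi hann hf hfi (hd' ▸ hd2 i)
  have hgen : ∀ p : Polynomial R, shiftA (embedP i p) s = 0 ↔ q' ∣ p := by
    intro p
    constructor
    · intro hp
      obtain ⟨b, hb⟩ := hd2 i
      have hdvd := embedP_dvd_mul_mvBeta0DivXi hann i hp
      rw [hb, hq, mul_left_comm, mul_dvd_mul_iff_left hdi0] at hdvd
      have hrel : IsRelPrime (embedP i q') b := by
        intro e he he'
        have hde := hd3 i (d i * e) (hq ▸ mul_dvd_mul_left _ he) (hb ▸ mul_dvd_mul_left _ he')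
        apply isUnit_of_dvd_one
        rw [← mul_dvd_mul_iff_left hdi0, mul_one]
        exact hde
      exact (embedP_dvd_embedP_iff i).1 (hrel.dvd_of_dvd_mul_right hdvd)
    · rintro ⟨r, rfl⟩
      rw [shiftA_embedP_eq_zero_iff] at hqs ⊢
      rw [mul_comm, embedP_mul, polyMulG_mul]
      exact polyMulG_eq_zero_of_le _ hqs
  obtain ⟨u, hu⟩ := isUnit_leadingCoeff_of_shiftA_eq_zero_iff_dvd hq0 hgen
  refine ⟨u⁻¹, Polynomial.C ((u⁻¹ : Rˣ) : R) * q', embedP i q', hq, ?_, ?_, fun p => ?_⟩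
  · rw [embedP_mul, embedP_C]
  · rw [Polynomial.Monic, Polynomial.leadingCoeff_mul, Polynomial.leadingCoeff_C, ← hu,
      Units.inv_mul]
  · rw [hgen, (Polynomial.isUnit_C.2 (u⁻¹).isUnit).mul_left_dvd]
end
end

section
/- A linear recurring sequence s : (-ℕ)ⁿ → R whose annihilator contains a cofinite ideal is eventually rectilinear. Conversely, if R is a potential domain and s is eventually rectilinear, then Ann(s) contains a cofinite ideal. -/
noncomputable section

variable {R : Type*}

/-- If a power series with no prime constant dividing it divides a nonzero constant,
then its constant coefficient is a unit. -/
theorem PowerSeries.isUnit_constantCoeff_of_mul_eq_C [CommRing R] [IsDomain R]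
    [UniqueFactorizationMonoid R] {Q : PowerSeries R}
    (hQ : ∀ π : R, Prime π → ∃ k, ¬ π ∣ PowerSeries.coeff k Q)
    {m : R} (hm : m ≠ 0) {T : PowerSeries R} (h : Q * T = PowerSeries.C m) :
    IsUnit (PowerSeries.constantCoeff Q) := by
  induction m using UniqueFactorizationMonoid.induction_on_prime generalizing T with
  | h₁ => exact absurd rfl hm
  | h₂ x hx =>
    have h0 := congrArg PowerSeries.constantCoeff h
    rw [map_mul, PowerSeries.constantCoeff_C] at h0
    exact isUnit_of_mul_isUnit_left (h0 ▸ hx)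
  | h₃ a π ha hπ ih =>
    have : (Ideal.span {π}).IsPrime := (Ideal.span_singleton_prime hπ.ne_zero).2 hπ
    set φ := PowerSeries.map (Ideal.Quotient.mk (Ideal.span {π})) with hφ
    have hφQ : φ Q ≠ 0 := by
      obtain ⟨k, hk⟩ := hQ π hπ
      intro h0
      have := congrArg (PowerSeries.coeff k) h0
      rw [hφ, PowerSeries.coeff_map, map_zero, Ideal.Quotient.eq_zero_iff_mem,
        Ideal.mem_span_singleton] at this
      exact hk this
    have hφT : φ T = 0 := by
      have h0 := congrArg φ h
      have hπ0 : Ideal.Quotient.mk (Ideal.span {π}) (π * a) = 0 :=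
        Ideal.Quotient.eq_zero_iff_mem.2 (Ideal.mem_span_singleton.2 (dvd_mul_right π a))
      rw [map_mul, hφ, PowerSeries.map_C, hπ0, map_zero] at h0
      exact (mul_eq_zero.1 h0).resolve_left hφQ
    have hdvd : ∀ k, π ∣ PowerSeries.coeff k T := by
      intro k
      have := congrArg (PowerSeries.coeff k) hφT
      rwa [hφ, PowerSeries.coeff_map, map_zero, Ideal.Quotient.eq_zero_iff_mem,
        Ideal.mem_span_singleton] at this
    choose c hc using hdvd
    have hT : T = PowerSeries.C π * PowerSeries.mk c := by
      ext k
      rw [PowerSeries.coeff_C_mul, PowerSeries.coeff_mk, hc]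
    refine ih ha (T := PowerSeries.mk c) ?_
    have hC : (PowerSeries.C π : PowerSeries R) ≠ 0 := by
      exact (map_ne_zero_iff _ PowerSeries.C_injective).2 hπ.ne_zero
    apply mul_left_cancel₀ hC
    rw [← map_mul, ← h, hT]
    ring

/-- The shift operator on sequences. -/
def seqShift (R : Type*) [CommSemiring R] : Module.End R (ℕ → R) where
  toFun t j := t (j + 1)
  map_add' _ _ := rfl
  map_smul' _ _ := rfl

theorem seqShift_pow_apply [CommSemiring R] (k : ℕ) (t : ℕ → R) (j : ℕ) :
    (seqShift R ^ k) t j = t (j + k) := by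
  induction k generalizing j with
  | zero => rfl
  | succ k ih =>
    rw [pow_succ']
    change (seqShift R ^ k) t (j + 1) = _
    rw [ih, add_right_comm, add_assoc]

theorem aeval_seqShift_apply [CommSemiring R] {p : Polynomial R} {N : ℕ}
    (hN : p.natDegree < N) (t : ℕ → R) (j : ℕ) :
    Polynomial.aeval (seqShift R) p t j = ∑ k ∈ Finset.range N, p.coeff k * t (j + k) := by
  rw [Polynomial.aeval_eq_sum_range' hN, LinearMap.sum_apply, Finset.sum_apply]
  simp [seqShift_pow_apply]

/-- A sequence satisfying a recurrence of order `p.natDegree` with zero initial values vanishes. -/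
theorem eq_zero_of_aeval_seqShift_eq_zero [CommRing R] [IsDomain R] {p : Polynomial R}
    (hp : p ≠ 0) {u : ℕ → R} (hu : Polynomial.aeval (seqShift R) p u = 0)
    (h0 : ∀ i < p.natDegree, u i = 0) : u = 0 := by
  funext k
  induction k using Nat.strong_induction_on with
  | _ k ih =>
    rcases lt_or_ge k p.natDegree with hk | hk
    · exact h0 k hk
    · have h := congrFun hu (k - p.natDegree)
      rw [aeval_seqShift_apply (Nat.lt_succ_self _), Finset.sum_range_succ,
        Finset.sum_eq_zero, zero_add, Nat.sub_add_cancel hk] at h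
      · exact (mul_eq_zero.1 h).resolve_left (Polynomial.leadingCoeff_ne_zero.2 hp)
      · intro i hi
        rw [Finset.mem_range] at hi
        rw [ih _ (by omega), Pi.zero_apply, mul_zero]

/-- If `p` has minimal degree `d + 1` among the nonzero annihilators of `t`, some multiple of `t`
is an impulse response: it starts with `d` zeros followed by a nonzero entry. -/
theorem exists_impulse_response [CommRing R] [IsDomain R] {p : Polynomial R} (hp : p ≠ 0)
    {t : ℕ → R} (hpt : Polynomial.aeval (seqShift R) p t = 0) {d : ℕ} (hd : p.natDegree = d + 1)
    (hmin : ∀ g : Polynomial R, g ≠ 0 → Polynomial.aeval (seqShift R) g t = 0 →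
      p.natDegree ≤ g.natDegree) :
    ∃ g : Polynomial R, (∀ i < d, Polynomial.aeval (seqShift R) g t i = 0) ∧
      Polynomial.aeval (seqShift R) g t d ≠ 0 := by
  let H : Matrix (Fin (d + 1)) (Fin (d + 1)) R := Matrix.of fun i j => t (i + j)
  let G : (Fin (d + 1) → R) → Polynomial R := fun v => ∑ j : Fin (d + 1), Polynomial.monomial (j : ℕ) (v j)
  have hG : ∀ v (i : Fin (d + 1)),
      Polynomial.aeval (seqShift R) (G v) t (i : ℕ) = H.mulVec v i := by
    intro v i
    simp [G, H, Matrix.mulVec, dotProduct, Polynomial.aeval_monomial, seqShift_pow_apply,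
      Finset.sum_apply, mul_comm]
  have hGc : ∀ v (j : Fin (d + 1)), (G v).coeff j = v j := by
    intro v j
    simp [G, Polynomial.finsetSum_coeff, Polynomial.coeff_monomial, Fin.val_inj]
  have hGd : ∀ v, (G v).natDegree < d + 1 := by
    intro v
    refine Nat.lt_succ_of_le (Polynomial.natDegree_sum_le_of_forall_le _ _ fun j _ => ?_)
    exact (Polynomial.natDegree_monomial_le _).trans (Nat.lt_succ_iff.1 j.2)
  have hdet : H.det ≠ 0 := by
    rw [Ne, ← Matrix.exists_mulVec_eq_zero_iff]
    rintro ⟨v, hv, hHv⟩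
    have hz : Polynomial.aeval (seqShift R) (G v) t = 0 := by
      refine eq_zero_of_aeval_seqShift_eq_zero hp ?_ ?_
      · rw [← Module.End.mul_apply, ← map_mul, mul_comm, map_mul, Module.End.mul_apply, hpt,
          map_zero]
      · intro i hi
        rw [hd] at hi
        exact (hG v ⟨i, hi⟩).trans (congrFun hHv _)
    have hGv : G v ≠ 0 := by
      intro h0
      refine hv (funext fun j => ?_)
      rw [← hGc v j, h0, Polynomial.coeff_zero, Pi.zero_apply]
    have := hmin _ hGv hz
    have := hGd v
    omega
  let w := H.adjugate.mulVec (Pi.single (Fin.last d) 1)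
  have hw : H.mulVec w = H.det • Pi.single (Fin.last d) 1 := by
    simp only [w, Matrix.mulVec_mulVec, Matrix.mul_adjugate, Matrix.smul_mulVec,
      Matrix.one_mulVec]
  refine ⟨G w, fun i hi => ?_, ?_⟩
  · rw [show i = ((⟨i, by omega⟩ : Fin (d + 1)) : ℕ) from rfl, hG, hw, Pi.smul_apply,
      Pi.single_eq_of_ne (by simp [Fin.ext_iff]; omega), smul_zero]
  · rw [show d = ((Fin.last d : Fin (d + 1)) : ℕ) from rfl, hG, hw]
    simpa using hdet

/-- Fatou's lemma: over a unique factorization domain, a primitive annihilator of minimal degree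
has a unit as leading coefficient. -/
theorem isUnit_leadingCoeff_of_minimal_s15 [CommRing R] [IsDomain R] [UniqueFactorizationMonoid R]
    {p : Polynomial R} (hp : p.IsPrimitive) {t : ℕ → R}
    (hpt : Polynomial.aeval (seqShift R) p t = 0)
    (hmin : ∀ g : Polynomial R, g ≠ 0 → Polynomial.aeval (seqShift R) g t = 0 →
      p.natDegree ≤ g.natDegree) :
    IsUnit p.leadingCoeff := by
  rcases hd : p.natDegree with _ | d
  · rw [Polynomial.natDegree_eq_zero] at hd
    obtain ⟨c, rfl⟩ := hd
    rw [Polynomial.leadingCoeff_C]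
    exact hp c dvd_rfl
  obtain ⟨g, hg0, hgd⟩ := exists_impulse_response hp.ne_zero hpt hd hmin
  set u := Polynomial.aeval (seqShift R) g t with hu
  have hpu : Polynomial.aeval (seqShift R) p u = 0 := by
    rw [hu, ← Module.End.mul_apply, ← map_mul, mul_comm, map_mul, Module.End.mul_apply, hpt,
      map_zero]
  let Q : PowerSeries R := PowerSeries.mk fun i => if i ≤ d + 1 then p.coeff (d + 1 - i) else 0
  let T : PowerSeries R := PowerSeries.mk fun k => u (k + d)
  have hlc : p.leadingCoeff = p.coeff (d + 1) := by rw [Polynomial.leadingCoeff, hd]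
  have hQT : Q * T = PowerSeries.C (p.leadingCoeff * u d) := by
    ext k
    rw [PowerSeries.coeff_mul, Finset.Nat.sum_antidiagonal_eq_sum_range_succ_mk,
      PowerSeries.coeff_C]
    rcases k with _ | k
    · simp [Q, T, hlc]
    · rw [if_neg (Nat.succ_ne_zero k)]
      have h := congrFun hpu k
      rw [aeval_seqShift_apply (N := d + 2) (by omega), ← Finset.sum_range_reflect,
        Pi.zero_apply] at h
      rw [← h]
      have h1 : Finset.range (k + 1).succ ⊆ Finset.range (k + d + 4) :=
        Finset.range_subset_range.2 (by omega)
      have h2 : Finset.range (d + 2) ⊆ Finset.range (k + d + 4) :=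
        Finset.range_subset_range.2 (by omega)
      let F : ℕ → R := fun i =>
        if i ≤ d + 1 ∧ i ≤ k + 1 then p.coeff (d + 1 - i) * u (k + 1 - i + d) else 0
      trans ∑ i ∈ Finset.range (k + d + 4), F i
      · rw [← Finset.sum_subset h1]
        · refine Finset.sum_congr rfl fun i hi => ?_
          rw [Finset.mem_range] at hi
          have hi' : i ≤ k + 1 := by omega
          simp only [Q, T, F, PowerSeries.coeff_mk, hi', and_true, ite_mul, zero_mul]
        · intro i _ hi
          rw [Finset.mem_range] at hi
          exact if_neg (by omega)
      · symm
        rw [← Finset.sum_subset h2]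
        · refine Finset.sum_congr rfl fun i hi => ?_
          rw [Finset.mem_range] at hi
          have hi' : i ≤ d + 1 := by omega
          simp only [F, hi', true_and]
          rw [show d + 2 - 1 - i = d + 1 - i by omega]
          split_ifs with hik
          · rw [show k + (d + 1 - i) = k + 1 - i + d by omega]
          · rw [hg0 _ (by omega), mul_zero]
        · intro i _ hi
          rw [Finset.mem_range] at hi
          exact if_neg (by omega)
  have hunit := PowerSeries.isUnit_constantCoeff_of_mul_eq_C (Q := Q) (T := T) ?_
    (mul_ne_zero (Polynomial.leadingCoeff_ne_zero.2 hp.ne_zero) hgd) hQT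
  · rw [← PowerSeries.coeff_zero_eq_constantCoeff_apply] at hunit
    simpa [Q, hlc] using hunit
  · intro π hπ
    by_contra! hall
    refine hπ.not_isUnit (hp π (Polynomial.C_dvd_iff_dvd_coeff _ _ |>.2 fun i => ?_))
    rcases le_or_gt i (d + 1) with hi | hi
    · have := hall (d + 1 - i)
      simpa [Q, Nat.sub_sub_self hi] using this
    · rw [Polynomial.coeff_eq_zero_of_natDegree_lt (by omega)]
      exact dvd_zero π

/-- Over a unique factorization domain, every nonzero annihilator of a sequence has a monic factor
that annihilates the sequence. -/
theorem exists_monic_dvd_aeval_seqShift_eq_zero [CommRing R] [IsDomain R]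
    [UniqueFactorizationMonoid R] {f : Polynomial R} (hf : f ≠ 0) {t : ℕ → R}
    (hft : Polynomial.aeval (seqShift R) f t = 0) :
    ∃ q : Polynomial R, q.Monic ∧ q ∣ f ∧ Polynomial.aeval (seqShift R) q t = 0 := by
  let _ : NormalizedGCDMonoid R := Classical.choice inferInstance
  let S : Set (Polynomial R) := {g | g ≠ 0 ∧ Polynomial.aeval (seqShift R) g t = 0}
  obtain ⟨p₀, ⟨hp₀, hp₀t⟩, hmin₀⟩ :=
    exists_minimalFor_of_wellFoundedLT (· ∈ S) Polynomial.natDegree ⟨f, hf, hft⟩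
  have hmin : ∀ g : Polynomial R, g ≠ 0 → Polynomial.aeval (seqShift R) g t = 0 →
      p₀.primPart.natDegree ≤ g.natDegree := by
    intro g hg hgt
    rw [Polynomial.natDegree_primPart]
    exact (le_total p₀.natDegree g.natDegree).elim id (hmin₀ ⟨hg, hgt⟩)
  have hpt : Polynomial.aeval (seqShift R) p₀.primPart t = 0 := by
    rw [p₀.eq_C_content_mul_primPart, map_mul, Polynomial.aeval_C, Module.End.mul_apply,
      Module.algebraMap_end_apply] at hp₀t
    exact (smul_eq_zero.1 hp₀t).resolve_left (Polynomial.content_eq_zero_iff.not.2 hp₀)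
  have hu := isUnit_leadingCoeff_of_minimal_s15 p₀.isPrimitive_primPart hpt hmin
  set p := p₀.primPart
  obtain ⟨v, hv⟩ := hu
  have hmonic : (Polynomial.C (↑v⁻¹ : R) * p).Monic := by
    rw [Polynomial.Monic, Polynomial.leadingCoeff_mul, Polynomial.leadingCoeff_C, ← hv,
      Units.inv_mul]
  have hqt : Polynomial.aeval (seqShift R) (Polynomial.C (↑v⁻¹ : R) * p) t = 0 := by
    rw [map_mul, Module.End.mul_apply, hpt, map_zero]
  have hdeg : (Polynomial.C (↑v⁻¹ : R) * p).natDegree = p.natDegree :=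
    Polynomial.natDegree_C_mul (Units.ne_zero _)
  set q := Polynomial.C (↑v⁻¹ : R) * p
  refine ⟨q, hmonic, ?_, hqt⟩
  rw [← Polynomial.modByMonic_eq_zero_iff_dvd hmonic]
  by_contra hr
  have hrt : Polynomial.aeval (seqShift R) (f.modByMonic q) t = 0 := by
    rw [Polynomial.modByMonic_eq_sub_mul_div, map_sub, LinearMap.sub_apply, hft,
      mul_comm, map_mul, Module.End.mul_apply, hqt, map_zero, sub_zero]
  have h1 := hmin _ hr hrt
  have h2 := Polynomial.degree_modByMonic_lt f hmonic
  have h3 := Polynomial.natDegree_lt_natDegree hr h2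
  omega

/-- Over a unique factorization domain, a nonzero polynomial has a monic factor that annihilates
every sequence annihilated by the polynomial. -/
theorem exists_monic_annihilator [CommRing R] [IsDomain R] [UniqueFactorizationMonoid R]
    {f : Polynomial R} (hf : f ≠ 0) :
    ∃ q : Polynomial R, q.Monic ∧ ∀ t : ℕ → R, Polynomial.aeval (seqShift R) f t = 0 →
      Polynomial.aeval (seqShift R) q t = 0 := by
  let P : ℕ → Prop := fun d => ∃ q : Polynomial R, q.Monic ∧ q ∣ f ∧ q.natDegree = d
  have hP : ∃ d, P d ∧ ∀ e, P e → e ≤ d := by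
    classical
    have hb : ∀ e, P e → e ≤ f.natDegree := by
      rintro _ ⟨q, -, hq, rfl⟩
      exact Polynomial.natDegree_le_of_dvd hq hf
    have h0 : P 0 := ⟨1, Polynomial.monic_one, one_dvd f, Polynomial.natDegree_one⟩
    exact ⟨Nat.findGreatest P f.natDegree, Nat.findGreatest_spec (Nat.zero_le _) h0,
      fun e he => Nat.le_findGreatest (hb e he) he⟩
  obtain ⟨d, ⟨q, hq, ⟨r, rfl⟩, rfl⟩, hmax⟩ := hP
  refine ⟨q, hq, fun t ht => ?_⟩
  rw [mul_comm, map_mul, Module.End.mul_apply] at ht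
  obtain ⟨q', hq', hdvd, hq't⟩ :=
    exists_monic_dvd_aeval_seqShift_eq_zero (right_ne_zero_of_mul hf) ht
  have hle := hmax _ ⟨q * q', hq.mul hq', mul_dvd_mul_left q hdvd, rfl⟩
  rw [hq.natDegree_mul hq'] at hle
  rw [hq'.natDegree_eq_zero.1 (by omega), map_one, Module.End.one_apply] at hq't
  exact hq't

theorem shiftA_zero [CommSemiring R] {σ : Type*} (s : (σ → ℕ) → R) :
    shiftA (0 : MvPolynomial σ R) s = 0 := by
  funext b
  simp [shiftA]

theorem shiftA_mul [CommSemiring R] {σ : Type*} (f g : MvPolynomial σ R) (s : (σ → ℕ) → R) :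
    shiftA (f * g) s = shiftA f (shiftA g s) := by
  induction f using MvPolynomial.induction_on' with
  | add f₁ f₂ h₁ h₂ => rw [add_mul, shiftA_add, h₁, h₂, shiftA_add]
  | monomial a r =>
    induction g using MvPolynomial.induction_on' with
    | add g₁ g₂ h₁ h₂ =>
      rw [mul_add, shiftA_add, h₁, h₂, shiftA_add]
      funext b
      simp only [Pi.add_apply, shiftA_monomial, mul_add]
    | monomial c r' =>
      funext b
      rw [MvPolynomial.monomial_mul]
      simp only [shiftA_monomial, Finsupp.add_apply, mul_assoc, add_assoc]

/-- The annihilator ideal of a multivariate sequence. -/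
def shiftAnn [CommSemiring R] {σ : Type*} (s : (σ → ℕ) → R) : Ideal (MvPolynomial σ R) where
  carrier := {f | shiftA f s = 0}
  zero_mem' := shiftA_zero s
  add_mem' {f g} hf hg := by
    rw [Set.mem_ofPred_eq] at hf hg ⊢
    rw [shiftA_add, hf, hg, add_zero]
  smul_mem' f g hg := by
    rw [Set.mem_ofPred_eq] at hg ⊢
    rw [smul_eq_mul, shiftA_mul, hg]
    funext b
    simp [shiftA]

theorem mem_shiftAnn [CommSemiring R] {σ : Type*} {s : (σ → ℕ) → R} {f : MvPolynomial σ R} :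
    f ∈ shiftAnn s ↔ shiftA f s = 0 :=
  Iff.rfl

theorem embedP_eq_aeval [CommSemiring R] {n : ℕ} (i : Fin n) (p : Polynomial R) :
    embedP i p = Polynomial.aeval (MvPolynomial.X i) p :=
  rfl

/-- On the lines parallel to the `i`-th axis, `embedP i p` acts as `p` does on sequences. -/
theorem shiftA_embedP_apply [CommSemiring R] {n : ℕ} (i : Fin n) (p : Polynomial R)
    (s : (Fin n → ℕ) → R) (b : Fin n → ℕ) (j : ℕ) :
    shiftA (embedP i p) s (b + Pi.single i j) =
      Polynomial.aeval (seqShift R) p (fun k => s (b + Pi.single i k)) j := by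
  induction p using Polynomial.induction_on' with
  | add p q hp hq =>
    rw [embedP_eq_aeval, map_add, shiftA_add, map_add]
    exact congrArg₂ (· + ·) hp hq
  | monomial k a =>
    have h : embedP i (Polynomial.monomial k a) =
        MvPolynomial.monomial (Finsupp.single i k) a := by
      rw [embedP, Polynomial.eval₂_monomial, ← MvPolynomial.C_mul_X_pow_eq_monomial]
    rw [h, shiftA_monomial, Polynomial.aeval_monomial, Module.End.mul_apply,
      Module.algebraMap_end_apply, Pi.smul_apply, seqShift_pow_apply, smul_eq_mul,
      Pi.single_add, ← add_assoc, ← Finsupp.single_eq_pi_single i k]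
    rfl

theorem shiftA_embedP_eq_zero_iff_s15 [CommSemiring R] {n : ℕ} (i : Fin n) (p : Polynomial R)
    (s : (Fin n → ℕ) → R) :
    shiftA (embedP i p) s = 0 ↔
      ∀ b : Fin n → ℕ, Polynomial.aeval (seqShift R) p (fun k => s (b + Pi.single i k)) = 0 := by
  refine ⟨fun h b => funext fun j => ?_, fun h => funext fun b => ?_⟩
  · rw [← shiftA_embedP_apply, h, Pi.zero_apply, Pi.zero_apply]
  · have := shiftA_embedP_apply i p s b 0
    rwa [Pi.single_zero, add_zero, h] at this

/-- An ideal containing a monic polynomial in each variable is cofinite. -/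
theorem finite_quotient_of_monic_mem [CommRing R] {n : ℕ} {I : Ideal (MvPolynomial (Fin n) R)}
    (h : ∀ i, ∃ q : Polynomial R, q.Monic ∧ embedP i q ∈ I) :
    Module.Finite R (MvPolynomial (Fin n) R ⧸ I) := by
  let φ := Ideal.Quotient.mkₐ R I
  have hφ : Function.Surjective φ := Ideal.Quotient.mkₐ_surjective R I
  have hint : ∀ x ∈ φ '' Set.range MvPolynomial.X, IsIntegral R x := by
    rintro _ ⟨_, ⟨i, rfl⟩, rfl⟩
    obtain ⟨q, hq, hqI⟩ := h i
    refine ⟨q, hq, ?_⟩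
    rw [← Polynomial.aeval_def, Polynomial.aeval_algHom_apply, ← embedP_eq_aeval]
    exact Ideal.Quotient.eq_zero_iff_mem.2 hqI
  have hfg := fg_adjoin_of_finite ((Set.finite_range MvPolynomial.X).image φ) hint
  rw [← AlgHom.map_adjoin, MvPolynomial.adjoin_range_X, Algebra.map_top,
    (AlgHom.range_eq_top φ).2 hφ, Algebra.top_toSubmodule] at hfg
  exact ⟨hfg⟩

/-- A cofinite ideal contains a nonconstant polynomial in each variable. -/
theorem exists_embedP_mem_of_finite_quotient [CommRing R] [Nontrivial R] {n : ℕ}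
    (I : Ideal (MvPolynomial (Fin n) R)) [Module.Finite R (MvPolynomial (Fin n) R ⧸ I)]
    (i : Fin n) : ∃ p : Polynomial R, 1 ≤ p.natDegree ∧ embedP i p ∈ I := by
  obtain ⟨q, hq, hq0⟩ :=
    IsIntegral.of_finite R (Ideal.Quotient.mkₐ R I (MvPolynomial.X i))
  refine ⟨q * Polynomial.X, ?_, ?_⟩
  · rw [hq.natDegree_mul Polynomial.monic_X, Polynomial.natDegree_X]
    exact Nat.le_add_left 1 _
  · rw [← Polynomial.aeval_def, Polynomial.aeval_algHom_apply] at hq0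
    rw [embedP_eq_aeval, map_mul]
    exact I.mul_mem_right _ (Ideal.Quotient.eq_zero_iff_mem.1 hq0)

/-- a linear recurring sequence whose annihilator contains a cofinite ideal is
eventually rectilinear; conversely, over a potential domain, an eventually rectilinear
sequence has a cofinite ideal inside its annihilator. -/
theorem stmt15 [CommRing R] [IsDomain R] [UniqueFactorizationMonoid R] {n : ℕ}
    (hpot : ∀ m : ℕ,
      haveI : IsDomain (MvPowerSeries (Fin m) R) := NoZeroDivisors.to_isDomain _
      UniqueFactorizationMonoid (MvPowerSeries (Fin m) R))
    (s : (Fin n → ℕ) → R) :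
    ((∃ I : Ideal (MvPolynomial (Fin n) R),
        (∀ g ∈ I, shiftA g s = 0) ∧
        Module.Finite R (MvPolynomial (Fin n) R ⧸ I)) →
      ∀ i : Fin n, ∃ p : Polynomial R, 1 ≤ p.natDegree ∧ shiftA (embedP i p) s = 0) ∧
    ((∀ i : Fin n, ∃ p : Polynomial R, 1 ≤ p.natDegree ∧ shiftA (embedP i p) s = 0) →
      ∃ I : Ideal (MvPolynomial (Fin n) R),
        (∀ g ∈ I, shiftA g s = 0) ∧
        Module.Finite R (MvPolynomial (Fin n) R ⧸ I)) := by
  refine ⟨fun ⟨I, hI, _⟩ i => ?_, fun h => ⟨shiftAnn s, fun g hg => hg, ?_⟩⟩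
  · obtain ⟨p, hp, hpI⟩ := exists_embedP_mem_of_finite_quotient I i
    exact ⟨p, hp, hI _ hpI⟩
  · refine finite_quotient_of_monic_mem fun i => ?_
    obtain ⟨p, hp, hps⟩ := h i
    have hp0 : p ≠ 0 := Polynomial.ne_zero_of_natDegree_gt hp
    obtain ⟨q, hq, hqt⟩ := exists_monic_annihilator hp0
    rw [shiftA_embedP_eq_zero_iff_s15] at hps
    exact ⟨q, hq, mem_shiftAnn.2 ((shiftA_embedP_eq_zero_iff_s15 i q s).2 fun b => hqt _ (hps b))⟩
end
end
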